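/- The ordered Ramsey number of the ordered diamond graph K₄ − e with vertex set {1,2,3,4} and all edges of K₄ except {2,3} equals 13: every 2-coloring of the edges of the complete graph on {1,...,13} contains a monochromatic ordered copy of this graph, and there is a 2-coloring of the edges of the complete graph on {1,...,12} containing no such copy. -/

import Mathlib

/-- A 2-coloring `c` of the edges of the complete graph on the ordered vertex set
`{1,…,N}` contains an ordered copy, in color `b`, of the ordered graph with vertex
set `{1,…,n}` and edge set `E` (edges listed as pairs `(i, j)` with `i < j`):
there is a strictly increasing map `φ : {1,…,n} → {1,…,N}` such that every edge
`(i, j) ∈ E` has `(φ i, φ j)` colored `b`. -/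
def ContainsOrderedCopy (n N : ℕ) (E : Finset (ℕ × ℕ)) (c : ℕ → ℕ → Bool) (b : Bool) :
    Prop :=
  ∃ φ : ℕ → ℕ,
    (∀ i, 1 ≤ i → i ≤ n → 1 ≤ φ i ∧ φ i ≤ N) ∧
    (∀ i j, 1 ≤ i → i < j → j ≤ n → φ i < φ j) ∧
    (∀ e ∈ E, c (φ e.1) (φ e.2) = b)

/-- A 2-coloring `c` of the edges of the complete graph on `{1,…,N}` contains a
monochromatic ordered copy of the ordered graph with vertex set `{1,…,n}` and
edge set `E`. -/
def ContainsMonoOrderedCopy (n N : ℕ) (E : Finset (ℕ × ℕ)) (c : ℕ → ℕ → Bool) : Prop :=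
  ∃ b : Bool, ContainsOrderedCopy n N E c b

/-!
Let the edge between the least and the greatest vertex, `⊥` and `⊤`, be `true`. In a colouring
without a monochromatic ordered diamond a vertex has, in either colour, at most six later and at
most six earlier neighbours. Sorting the inner vertices by the colours of their edges to `⊥` and
`⊤`, one finds that among thirteen vertices at least four are of type `(true, false)`, four of
type `(false, true)` and two of type `(false, false)`. Together with `⊥` and `⊤`, these ten
vertices already force a diamond. To see this, one inserts the twelve vertices one at a time into
a linear order, which is known within each type, and follows up the colours forced by earlier
ones. This search is carried out by a verified procedure. Two observations make it short: the
colours of only two edges determine nearly all that happens among the vertices of types `(true,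
false)` and `(false, false)`, and reversing the order exchanges the types `(true, false)` and
`(false, true)`.
-/

namespace OrderedDiamond

section Diamonds

variable {α : Type*} [LinearOrder α]

/-- In the colouring `e`, the vertices `u`, `m`, `w` span a triangle of colour `k` in which `m` lies
between `u` and `w`. The missing edge of the diamond joins two such `m`. -/
structure IsMiddle (e : α → α → Bool) (k : Bool) (u w m : α) : Prop where
  mem : m ∈ Set.uIoo u w
  base : e u w = k
  left : e u m = k
  right : e m w = k

/-- A symmetric colouring without a monochromatic ordered diamond. Symmetry lets an edge be written
without regard to the order of its ends, so that the notion is self-dual. -/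
structure DiamondFree (e : α → α → Bool) : Prop where
  symm : ∀ u w, e u w = e w u
  middle_subsingleton : ∀ k u w, {m | IsMiddle e k u w m}.Subsingleton

variable {e : α → α → Bool} {k : Bool}

theorem IsMiddle.symm {u w m : α} (h : IsMiddle e k u w m) (symm : ∀ u w, e u w = e w u) :
    IsMiddle e k w u m :=
  ⟨Set.uIoo_comm u w ▸ h.mem, symm w u ▸ h.base, symm w m ▸ h.right, symm m u ▸ h.left⟩

theorem IsMiddle.of_lt {u w m : α} (hum : u < m) (hmw : m < w) (huw : e u w = k) (hl : e u m = k)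
    (hr : e m w = k) : IsMiddle e k u w m :=
  ⟨Set.Ioo_subset_uIoo ⟨hum, hmw⟩, huw, hl, hr⟩

theorem DiamondFree.of_forall_lt (symm : ∀ u w, e u w = e w u)
    (h : ∀ u m m' w, u < m → m < m' → m' < w → e u m = e u w → e m w = e u w → e u m' = e u w →
      e m' w ≠ e u w) : DiamondFree e where
  symm := symm
  middle_subsingleton k u w m hm m' hm' := by
    by_contra hne
    wlog huw : u ≤ w generalizing u w
    · exact this w u (hm.symm symm) (hm'.symm symm) (le_of_not_ge huw)
    wlog hmm' : m < m' generalizing m m'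
    · exact this m' m (Ne.symm hne) hm' hm ((le_of_not_gt hmm').lt_of_ne (Ne.symm hne))
    obtain ⟨⟨hmem, hbase, hl, hr⟩, ⟨hmem', -, hl', hr'⟩⟩ := And.intro hm hm'
    rw [Set.uIoo_of_le huw] at hmem hmem'
    subst hbase
    exact h u m m' w hmem.1 hmm' hmem'.2 hl hr hl' hr'

theorem DiamondFree.eq_of_lt (he : DiamondFree e) {u w m m' : α} (huw : e u w = k)
    (hum : u < m) (hmw : m < w) (hl : e u m = k) (hr : e m w = k)
    (hum' : u < m') (hmw' : m' < w) (hl' : e u m' = k) (hr' : e m' w = k) : m = m' :=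
  he.middle_subsingleton k u w (.of_lt hum hmw huw hl hr) (.of_lt hum' hmw' huw hl' hr')

theorem DiamondFree.dual (he : DiamondFree e) : DiamondFree (α := αᵒᵈ) e where
  symm := he.symm
  middle_subsingleton k u w := by
    have key : ∀ m, IsMiddle (α := αᵒᵈ) e k u w m → IsMiddle (α := α) e k u w m := fun m h =>
      ⟨And.symm h.mem, h.base, h.left, h.right⟩
    exact fun m h m' h' => he.middle_subsingleton k u w (key m h) (key m' h')

theorem DiamondFree.compl (he : DiamondFree e) : DiamondFree fun u w => !e u w where
  symm u w := congrArg not (he.symm u w)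
  middle_subsingleton k u w := by
    have key : ∀ m, IsMiddle (fun u w => !e u w) k u w m → IsMiddle e (!k) u w m := fun m h =>
      ⟨h.mem, Bool.not_eq_eq_eq_not.mp h.base, Bool.not_eq_eq_eq_not.mp h.left,
        Bool.not_eq_eq_eq_not.mp h.right⟩
    exact fun m h m' h' => he.middle_subsingleton (!k) u w (key m h) (key m' h')

end Diamonds

section Counting

variable {α : Type*} [LinearOrder α] {e : α → α → Bool} {k : Bool}

/- Among five vertices there would be ten pairs; those of colour `k` are determined by their upper
end, which is not the least vertex, and the others by their lower end, which is not the greatest. -/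
theorem card_le_four {S : Finset α}
    (hback : ∀ w ∈ S, {u | u ∈ S ∧ u < w ∧ e u w = k}.Subsingleton)
    (hforw : ∀ u ∈ S, {w | w ∈ S ∧ u < w ∧ e u w = !k}.Subsingleton) : S.card ≤ 4 := by
  by_contra! hS
  let x := S.orderEmbOfCardLe hS
  have hx : ∀ i, x i ∈ S := S.orderEmbOfCardLe_mem hS
  let code (ij : Fin 5 × Fin 5) : Fin 5 ⊕ Fin 5 :=
    if e (x ij.1) (x ij.2) = k then .inl ij.2 else .inr ij.1
  have hcode : Set.InjOn code ({ij | ij.1 < ij.2} : Finset (Fin 5 × Fin 5)) := by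
    rintro ⟨i, j⟩ hij ⟨i', j'⟩ hij' h
    simp only [Finset.coe_filter, Finset.mem_univ, true_and, Set.mem_ofPred_eq] at hij hij'
    by_cases hk : e (x i) (x j) = k <;> by_cases hk' : e (x i') (x j') = k <;>
      simp only [code, hk, hk', if_true, if_false, Sum.inl.injEq, Sum.inr.injEq, reduceCtorEq] at h
    · subst h
      rw [x.injective (hback _ (hx j) ⟨hx i, x.strictMono hij, hk⟩
        ⟨hx i', x.strictMono hij', hk'⟩)]
    · subst h
      rw [x.injective (hforw _ (hx i) ⟨hx j, x.strictMono hij, Bool.eq_not.mpr hk⟩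
        ⟨hx j', x.strictMono hij', Bool.eq_not.mpr hk'⟩)]
  have hmaps : Set.MapsTo code ({ij | ij.1 < ij.2} : Finset (Fin 5 × Fin 5))
      (({0}ᶜ : Finset (Fin 5)).disjSum ({4}ᶜ : Finset (Fin 5))) := by
    rintro ⟨i, j⟩ hij
    simp only [Finset.coe_filter, Finset.mem_univ, true_and, Set.mem_ofPred_eq] at hij
    by_cases hk : e (x i) (x j) = k
    · simpa [code, hk] using Fin.ne_zero_of_lt hij
    · simpa [code, hk] using Fin.ne_last_of_lt hij
  exact absurd (Finset.card_le_card_of_injOn code hmaps hcode) (by decide)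

theorem DiamondFree.card_le_two_of_clique (he : DiamondFree e) {S : Finset α} {b : α}
    (hb : ∀ m ∈ S, m < b ∧ e m b = k) (hS : ∀ m ∈ S, ∀ m' ∈ S, m < m' → e m m' = k) :
    S.card ≤ 2 := by
  by_contra! hcard
  let x := S.orderEmbOfCardLe hcard
  have hx : ∀ i, x i ∈ S := S.orderEmbOfCardLe_mem hcard
  have h01 : x 0 < x 1 := x.strictMono (by decide)
  have h02 : x 0 < x 2 := x.strictMono (by decide)
  have h12 : x 1 = x 2 := he.eq_of_lt (hb _ (hx 0)).2
    h01 (hb _ (hx 1)).1 (hS _ (hx 0) _ (hx 1) h01) (hb _ (hx 1)).2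
    h02 (hb _ (hx 2)).1 (hS _ (hx 0) _ (hx 2) h02) (hb _ (hx 2)).2
  exact absurd (x.injective h12) (by decide)

/-- The neighbours of `u` in colour `k` that lie strictly between `a` and `b`. -/
def nbrsBetween [Fintype α] (e : α → α → Bool) (k : Bool) (u a b : α) : Finset α :=
  {m | a < m ∧ m < b ∧ e u m = k}

variable [Fintype α]

theorem mem_nbrsBetween {u a b m : α} :
    m ∈ nbrsBetween e k u a b ↔ a < m ∧ m < b ∧ e u m = k := by
  simp [nbrsBetween]

theorem DiamondFree.card_nbrsBetween_le_of_eq (he : DiamondFree e) {u a b : α} (hua : u < a)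
    (hab : a < b) (ha : e u a = k) (hb : e u b = k) (h : e a b = k) :
    (nbrsBetween e k u a b).card ≤ 4 := by
  have hright : ∀ m ∈ nbrsBetween e k u a b, e m b = !k := by
    intro m hm
    obtain ⟨ham, hmb, hm⟩ := mem_nbrsBetween.mp hm
    by_contra hk
    exact ham.ne (he.eq_of_lt hb hua hab ha h (hua.trans ham) hmb hm (by simpa using hk))
  refine card_le_four (e := e) (k := k) (fun w hw m hm m' hm' => ?_) (fun v hv m hm m' hm' => ?_)
  · have hw := mem_nbrsBetween.mp hw
    have hm₁ := mem_nbrsBetween.mp hm.1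
    have hm₁' := mem_nbrsBetween.mp hm'.1
    exact he.eq_of_lt hw.2.2 (hua.trans hm₁.1) hm.2.1 hm₁.2.2 hm.2.2
      (hua.trans hm₁'.1) hm'.2.1 hm₁'.2.2 hm'.2.2
  · exact he.eq_of_lt (hright v hv) hm.2.1 (mem_nbrsBetween.mp hm.1).2.1 hm.2.2 (hright m hm.1)
      hm'.2.1 (mem_nbrsBetween.mp hm'.1).2.1 hm'.2.2 (hright m' hm'.1)

/- At most one vertex is joined to `b` in colour `k`, at most one to both `a` and `b` in the other
colour, and the remaining ones are joined to each other and to `b` in the other colour. -/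
theorem DiamondFree.card_nbrsBetween_le_of_ne (he : DiamondFree e) {u a b : α} (hua : u < a)
    (ha : e u a = k) (hb : e u b = k) (h : e a b = !k) :
    (nbrsBetween e k u a b).card ≤ 4 := by
  let N := nbrsBetween e k u a b
  have hN {m : α} : m ∈ N ↔ a < m ∧ m < b ∧ e u m = k := mem_nbrsBetween
  let F := {m ∈ N | e a m = k ∧ e m b = !k}
  have hF {m : α} : m ∈ F ↔ m ∈ N ∧ e a m = k ∧ e m b = !k := Finset.mem_filter
  have hQ : ({m ∈ N | e m b = k}).card ≤ 1 := Finset.card_le_one.mpr fun m hm m' hm' => by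
    simp only [Finset.mem_filter, hN] at hm hm'
    exact he.eq_of_lt hb (hua.trans hm.1.1) hm.1.2.1 hm.1.2.2 hm.2
      (hua.trans hm'.1.1) hm'.1.2.1 hm'.1.2.2 hm'.2
  have hR : ({m ∈ N | e a m = (!k) ∧ e m b = !k}).card ≤ 1 :=
    Finset.card_le_one.mpr fun m hm m' hm' => by
      simp only [Finset.mem_filter, hN] at hm hm'
      exact he.eq_of_lt h hm.1.1 hm.1.2.1 hm.2.1 hm.2.2 hm'.1.1 hm'.1.2.1 hm'.2.1 hm'.2.2
  have hFF : ∀ m ∈ F, ∀ m' ∈ F, m < m' → e m m' = !k := by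
    intro m hm m' hm' hlt
    simp only [hF, hN] at hm hm'
    by_contra hk
    exact hm.1.1.ne (he.eq_of_lt hm'.1.2.2 hua hm'.1.1 ha hm'.2.1
      (hua.trans hm.1.1) hlt hm.1.2.2 (by simpa using hk))
  have hFcard : F.card ≤ 2 := he.card_le_two_of_clique
    (fun m hm => ⟨(hN.mp (hF.mp hm).1).2.1, (hF.mp hm).2.2⟩) hFF
  have hcover : N ⊆ {m ∈ N | e m b = k} ∪ ({m ∈ N | e a m = (!k) ∧ e m b = !k} ∪ F) := by
    intro m hm
    simp only [Finset.mem_union, Finset.mem_filter, hF, hm, true_and]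
    cases e a m <;> cases e m b <;> cases k <;> decide
  calc N.card ≤ _ := Finset.card_le_card hcover
    _ ≤ 1 + (1 + 2) := (Finset.card_union_le _ _).trans
      (add_le_add hQ ((Finset.card_union_le _ _).trans (add_le_add hR hFcard)))

theorem DiamondFree.card_forward_le_six (he : DiamondFree e) (u : α) (k : Bool) :
    ({m | u < m ∧ e u m = k} : Finset α).card ≤ 6 := by
  let S : Finset α := {m | u < m ∧ e u m = k}
  have mem_S {m : α} : m ∈ S ↔ u < m ∧ e u m = k := by simp [S]
  by_contra! hcard : 6 < S.card
  have hne : S.Nonempty := Finset.card_pos.mp (by omega)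
  let a := S.min' hne
  let b := S.max' hne
  obtain ⟨hua, ha⟩ := mem_S.mp (S.min'_mem hne)
  obtain ⟨-, hb⟩ := mem_S.mp (S.max'_mem hne)
  have hab : a < b := S.min'_lt_max'_of_card (by omega)
  have hcover : S ⊆ {a, b} ∪ nbrsBetween e k u a b := by
    intro m hm
    have := (S.min'_le m hm).lt_or_eq
    have := (S.le_max' m hm).lt_or_eq
    simp only [Finset.mem_union, Finset.mem_insert, Finset.mem_singleton, mem_nbrsBetween,
      (mem_S.mp hm).2]
    grind
  have hbetween : (nbrsBetween e k u a b).card ≤ 4 := by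
    by_cases h : e a b = k
    · exact he.card_nbrsBetween_le_of_eq hua hab ha hb h
    · exact he.card_nbrsBetween_le_of_ne hua ha hb (Bool.eq_not.mpr h)
  have := (Finset.card_le_card hcover).trans
    ((Finset.card_union_le _ _).trans (add_le_add Finset.card_le_two hbetween))
  omega

theorem DiamondFree.card_backward_le_six (he : DiamondFree e) (u : α) (k : Bool) :
    ({m | m < u ∧ e m u = k} : Finset α).card ≤ 6 := by
  simp only [he.symm _ u]
  exact he.dual.card_forward_le_six u k

variable [BoundedOrder α]

/-- The inner vertices joined to `⊥` in colour `k` and to `⊤` in colour `l`. -/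
def profile (e : α → α → Bool) (k l : Bool) : Finset α :=
  {m | ⊥ < m ∧ m < ⊤ ∧ e ⊥ m = k ∧ e m ⊤ = l}

theorem mem_profile {l : Bool} {m : α} :
    m ∈ profile e k l ↔ ⊥ < m ∧ m < ⊤ ∧ e ⊥ m = k ∧ e m ⊤ = l := by
  simp [profile]

theorem DiamondFree.card_profile_same_le_one (he : DiamondFree e) (h : e ⊥ ⊤ = k) :
    (profile e k k).card ≤ 1 := by
  refine Finset.card_le_one.mpr fun m hm m' hm' => ?_
  obtain ⟨hb, ht, hl, hr⟩ := mem_profile.mp hm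
  obtain ⟨hb', ht', hl', hr'⟩ := mem_profile.mp hm'
  exact he.eq_of_lt h hb ht hl hr hb' ht' hl' hr'

theorem DiamondFree.card_profile_not_le_four (he : DiamondFree e) (k : Bool) :
    (profile e k !k).card ≤ 4 := by
  refine card_le_four (e := e) (k := k) (fun w hw m hm m' hm' => ?_) (fun v hv m hm m' hm' => ?_)
  · obtain ⟨hbm, -, hm₁, -⟩ := mem_profile.mp hm.1
    obtain ⟨hbm', -, hm₁', -⟩ := mem_profile.mp hm'.1
    exact he.eq_of_lt (mem_profile.mp hw).2.2.1 hbm hm.2.1 hm₁ hm.2.2 hbm' hm'.2.1 hm₁' hm'.2.2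
  · obtain ⟨-, hmt, -, hm₁⟩ := mem_profile.mp hm.1
    obtain ⟨-, hmt', -, hm₁'⟩ := mem_profile.mp hm'.1
    exact he.eq_of_lt (mem_profile.mp hv).2.2.2 hm.2.1 hmt hm.2.2 hm₁ hm'.2.1 hmt' hm'.2.2 hm₁'

theorem card_le_add_card_profile (e : α → α → Bool) :
    Fintype.card α ≤ 2 + ((profile e true true).card + (profile e true false).card +
      ((profile e false true).card + (profile e false false).card)) := by
  have hcover : Finset.univ ⊆ {⊥, ⊤} ∪ ((profile e true true ∪ profile e true false) ∪
      (profile e false true ∪ profile e false false)) := by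
    intro m _
    simp only [Finset.mem_union, Finset.mem_insert, Finset.mem_singleton, mem_profile,
      bot_lt_iff_ne_bot, lt_top_iff_ne_top]
    grind
  refine (Finset.card_le_card hcover).trans ((Finset.card_union_le _ _).trans ?_)
  exact add_le_add Finset.card_le_two ((Finset.card_union_le _ _).trans
    (add_le_add (Finset.card_union_le _ _) (Finset.card_union_le _ _)))

theorem DiamondFree.card_profile_bot_le_six (he : DiamondFree e) (k : Bool) :
    (profile e k true).card + (profile e k false).card ≤ 6 := by
  rw [← Finset.card_union_of_disjoint]
  · refine (Finset.card_le_card fun m hm => ?_).trans (he.card_forward_le_six ⊥ k)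
    simp only [Finset.mem_union, mem_profile] at hm
    simp only [Finset.mem_filter, Finset.mem_univ, true_and]
    tauto
  · exact Finset.disjoint_left.mpr fun m hm hm' => by simp_all [mem_profile]

theorem DiamondFree.card_profile_top_le_six (he : DiamondFree e) (l : Bool) :
    (profile e true l).card + (profile e false l).card ≤ 6 := by
  rw [← Finset.card_union_of_disjoint]
  · refine (Finset.card_le_card fun m hm => ?_).trans (he.card_backward_le_six ⊤ l)
    simp only [Finset.mem_union, mem_profile] at hm
    simp only [Finset.mem_filter, Finset.mem_univ, true_and]
    tauto
  · exact Finset.disjoint_left.mpr fun m hm hm' => by simp_all [mem_profile]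

theorem DiamondFree.le_card_profile (he : DiamondFree e) (hcard : 13 ≤ Fintype.card α)
    (h : e ⊥ ⊤ = true) : 2 ≤ (profile e false false).card ∧ 4 ≤ (profile e true false).card ∧
      4 ≤ (profile e false true).card := by
  have := card_le_add_card_profile e
  have := he.card_profile_same_le_one h
  have : (profile e true false).card ≤ 4 := he.card_profile_not_le_four true
  have : (profile e false true).card ≤ 4 := he.card_profile_not_le_four false
  have := he.card_profile_bot_le_six false
  have := he.card_profile_top_le_six false
  omega

end Counting

section Search

/- The search below is run by the kernel. To keep it fast it avoids instances and matchers: sets are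
numbers handled by the operations on `ℕ` that the kernel computes natively, and control flow goes
through bare recursors. -/

/-- `cond` as a bare recursor. -/
noncomputable def pick {β : Type} (c : Bool) (x y : β) : β := Bool.rec y x c

/-- The right fold of a list, again as a bare recursor. -/
noncomputable def fold {β γ : Type} (cons : β → γ → γ) (nil : γ) (l : List β) : γ :=
  List.rec nil (fun a _ ih => cons a ih) l

/-- The singleton `{i}`, a set of labels being encoded by the binary digits of a number. -/
def bit (i : ℕ) : ℕ := Nat.pow 2 i

/-- The sets encoded by `A` and `B` are disjoint. -/
def disjoint (A B : ℕ) : Bool := (A.land B).beq 0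

/-- All labels in the set encoded by `A` satisfy `P`. -/
def Marks (A : ℕ) (P : ℕ → Prop) : Prop := ∀ i, A.testBit i → P i

variable {A B : ℕ} {P Q : ℕ → Prop}

theorem testBit_land (i : ℕ) : (A.land B).testBit i = (A.testBit i && B.testBit i) :=
  Nat.testBit_and A B i

theorem testBit_lor (i : ℕ) : (A.lor B).testBit i = (A.testBit i || B.testBit i) :=
  Nat.testBit_or A B i

theorem testBit_of_xor_land {C i : ℕ} (h : ((A.land B).xor ((A.land B).land C)).testBit i) :
    (A.land B).testBit i ∧ ¬((A.land B).land C).testBit i := by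
  have h : ((A.land B) ^^^ ((A.land B).land C)).testBit i := h
  rw [Nat.testBit_xor, testBit_land (B := C)] at h
  rw [testBit_land (B := C)]
  cases hAB : (A.land B).testBit i <;> simp_all

theorem testBit_bit {i j : ℕ} (h : (bit i).testBit j) : j = i :=
  (of_decide_eq_true (Nat.testBit_two_pow.symm.trans h)).symm

theorem Marks.mono (hA : Marks A P) (h : ∀ i, P i → Q i) : Marks A Q := fun i hi => h i (hA i hi)

theorem marks_zero : Marks 0 P := fun i hi => by simp at hi

theorem marks_bit {i : ℕ} (h : P i) : Marks (bit i) P := fun _ hj => testBit_bit hj ▸ h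

theorem Marks.land (hA : Marks A P) (hB : Marks B Q) : Marks (A.land B) fun i => P i ∧ Q i :=
  fun i hi => by
    rw [testBit_land, Bool.and_eq_true] at hi
    exact ⟨hA i hi.1, hB i hi.2⟩

theorem Marks.lor (hA : Marks A P) (hB : Marks B P) : Marks (A.lor B) P := fun i hi => by
  rw [testBit_lor, Bool.or_eq_true] at hi
  exact hi.elim (hA i) (hB i)

theorem Marks.pick {c : Bool} (hA : c = true → Marks A P) (hB : c = false → Marks B P) :
    Marks (pick c A B) P := by
  cases c
  exacts [hB rfl, hA rfl]

theorem pick_eq_false {c x y : Bool} (hx : c = true → x = false) (hy : c = false → y = false) :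
    pick c x y = false := by
  cases c
  exacts [hy rfl, hx rfl]

theorem exists_of_disjoint_eq_false (h : disjoint A B = false) :
    ∃ i, A.testBit i ∧ B.testBit i := by
  have hne : A.land B ≠ 0 := Nat.ne_of_beq_eq_false h
  obtain ⟨i, hi⟩ := Nat.exists_testBit_of_ne_zero hne
  rw [testBit_land, Bool.and_eq_true] at hi
  exact ⟨i, hi⟩

theorem Marks.of_disjoint_eq_false (hA : Marks A P) (hB : Marks B Q)
    (h : disjoint A B = false) : ∃ i, P i ∧ Q i :=
  (exists_of_disjoint_eq_false h).imp fun i hi => ⟨hA i hi.1, hB i hi.2⟩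

theorem Marks.of_disjoint_bit_eq_false {i : ℕ} (hA : Marks A P) (h : disjoint A (bit i) = false) :
    P i := by
  obtain ⟨j, hj, hi⟩ := exists_of_disjoint_eq_false h
  exact testBit_bit hi ▸ hA j hj

theorem Marks.exists_ne (hA : Marks A P) (h : disjoint A (A - 1) = false) :
    ∃ i j, P i ∧ P j ∧ i ≠ j := by
  obtain ⟨i, hi, -⟩ := exists_of_disjoint_eq_false h
  by_contra! hall
  have hsingle : A = 2 ^ i := Nat.eq_of_testBit_eq fun j => by
    rw [Nat.testBit_two_pow, Bool.eq_iff_iff, decide_eq_true_iff]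
    exact ⟨fun hj => hall i j (hA i hi) (hA j hj), fun h => h ▸ hi⟩
  refine Nat.ne_of_beq_eq_false h ?_
  change A &&& (A - 1) = 0
  rw [hsingle, Nat.and_two_pow_sub_one_eq_mod, Nat.mod_self]

/-- The rule that the edge between the labels `fst` and `snd` has colour `color` whenever `fst` lies
before `snd`. Two rules that differ in their colours together forbid this order. -/
structure Rule where
  fst : ℕ
  snd : ℕ
  color : Bool
  deriving DecidableEq

/-- What the search knows of a vertex that it has placed: the sets of labels before and after it,
its neighbours `nbr k` in colour `k`, and the set `mated k` of those labels that span together with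
it a triangle of colour `k` whose third vertex lies between them. -/
structure Vertex where
  label : ℕ
  before : ℕ
  after : ℕ
  nbr : Bool → ℕ
  mated : Bool → ℕ

/-- The vertices making a triangle of colour `k` with the new vertex and `r` if these two are joined
in colour `k`. Here `inner` consists of vertices between the two, and `K` gives the known neighbours
of the new vertex in either colour. -/
noncomputable def middles (inner : ℕ) (r : Vertex) (K : Bool → ℕ) (k : Bool) : ℕ :=
  (inner.land (r.nbr k)).land (K k)

/-- The vertices that cannot be joined to the new vertex in colour `k` once `r` is. If such a `u`
lies on the far side of the new vertex and is mated to `r`, the new vertex would be a second middle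
of `u` and `r`. If it lies between the new vertex and `r`, it would be a second middle of these. -/
noncomputable def forced (inner far : ℕ) (r : Vertex) (K : Bool → ℕ) (k : Bool) : ℕ :=
  (far.land (r.mated k)).lor (pick ((middles inner r K k).beq 0) 0
    ((inner.land (r.nbr k)).xor (middles inner r K k)))

/-- Record the neighbours `same` in colour `k` and the neighbours `other` in colour `!k`. -/
noncomputable def extend (K : Bool → ℕ) (k : Bool) (same other : ℕ) (l : Bool) : ℕ :=
  (K l).lor (pick l (pick k same other) (pick k other same))

/-- Continue with `next` unless some edge carries both colours. -/
noncomputable def guard (K : Bool → ℕ) (next : (Bool → ℕ) → Bool) : Bool :=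
  pick (disjoint (K true) (K false)) (next K) true

/-- Join the new vertex to `r` in colour `k`, unless this completes a diamond. -/
noncomputable def paint (inner far : ℕ) (r : Vertex) (next : (Bool → ℕ) → Bool) (K : Bool → ℕ)
    (k : Bool) : Bool :=
  pick (disjoint (middles inner r K k) (Nat.sub (middles inner r K k) 1))
    (guard (extend K k (bit r.label) (forced inner far r K k)) next) true

/-- Run through the edges from the new vertex to the listed vertices. A coloured edge is painted for
its consequences. An uncoloured one is tried in both colours if `split` holds and is skipped
otherwise. -/
noncomputable def sweep (split : Bool) (inner : Vertex → ℕ) (far : ℕ)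
    (next : (Bool → ℕ) → Bool) : List Vertex → (Bool → ℕ) → Bool :=
  fold (fun r ih K =>
    pick (disjoint (K true) (bit r.label))
      (pick (disjoint (K false) (bit r.label))
        (pick split
          (pick (paint (inner r) far r ih K true) (paint (inner r) far r ih K false) false) (ih K))
        (paint (inner r) far r ih K false))
      (paint (inner r) far r ih K true)) next

/-- The labels mated to the new vertex in colour `k`. -/
noncomputable def mates (inner : Vertex → ℕ) (K : Bool → ℕ) (k : Bool) : List Vertex → ℕ :=
  fold (fun r m =>
    pick (disjoint (inner r) ((r.nbr k).land (K k))) m (((K k).land (bit r.label)).lor m)) 0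

/-- Update `r` after the insertion of `v`, which lies between `r` and the labels in `far`. -/
noncomputable def connect (v far : ℕ) (K mate : Bool → ℕ) (r : Vertex) : Vertex :=
  { r with
    nbr := fun k => pick (disjoint (K k) (bit r.label)) (r.nbr k) ((r.nbr k).lor (bit v))
    mated := fun k => pick (disjoint (K k) (bit r.label)) (r.mated k)
      (((r.mated k).lor (far.land ((r.nbr k).land (K k)))).lor
        (pick (disjoint (mate k) (bit r.label)) 0 (bit v))) }

/-- The linear order `L.reverse ++ R` with `v` inserted between its two parts, where `A` and `B`
encode the labels of `L` and `R`. -/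
noncomputable def place (v A B : ℕ) (L R : List Vertex) (K : Bool → ℕ) : List Vertex :=
  let mate := fun k =>
    (mates (fun r => r.after.land A) K k L).lor (mates (fun r => r.before.land B) K k R)
  (L.map fun r => { connect v B K mate r with after := r.after.lor (bit v) }).reverseAux
    (⟨v, A, B, K, mate⟩ ::
      R.map fun r => { connect v A K mate r with before := r.before.lor (bit v) })

/-- Refute every colouring in which `v` stands between `L` and `R`. Exhausting the forced colours
before splitting keeps the search tree small. -/
noncomputable def insertBetween (v : ℕ) (known : ℕ → ℕ → Bool → ℕ) (next : List Vertex → Bool)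
    (A B : ℕ) (L R : List Vertex) : Bool :=
  let sweeps (split : Bool) (next : (Bool → ℕ) → Bool) :=
    sweep split (fun r => r.after.land A) B (sweep split (fun r => r.before.land B) A next R) L
  guard (known A B) (sweeps false (sweeps true fun K => next (place v A B L R K)))

/-- Refute every position of `v` after the vertices of `L`. -/
noncomputable def insertAfter (v : ℕ) (known : ℕ → ℕ → Bool → ℕ) (next : List Vertex → Bool)
    (R : List Vertex) : ℕ → List Vertex → Bool :=
  List.rec (fun A L => insertBetween v known next A 0 L [])
    (fun r R ih A L =>
      pick (insertBetween v known next A (r.after.lor (bit r.label)) L (r :: R))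
        (ih (r.before.lor (bit r.label)) (r :: L)) false) R

/-- The labels `g r`, for the rules `r` satisfying `f`. -/
noncomputable def mask (rules : List Rule) (f : Rule → Bool) (g : Rule → ℕ) : ℕ :=
  fold (fun r m => pick (f r) ((bit (g r)).lor m) m) 0 rules

/-- The neighbours of `v` in colour `k` prescribed by the rules when `A` precedes and `B` follows
`v`. -/
noncomputable def known (rules : List Rule) (v A B : ℕ) (k : Bool) : ℕ :=
  ((mask rules (fun r => r.snd.beq v && r.color == k) Rule.fst).land A).lor
    ((mask rules (fun r => r.fst.beq v && r.color == k) Rule.snd).land B)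

/-- Insert the labels in `order` one after the other in all possible ways; `true` means that no
diamond-free colouring obeys the rules. -/
noncomputable def refutes (rules : List Rule) (order : List ℕ) : List Vertex → Bool :=
  fold (fun v next st => insertAfter v (known rules v) next st 0 []) (fun _ => false) order

variable {α : Type*} {e : α → α → Bool} {p : ℕ → α} {v : ℕ} {K : Bool → ℕ} {k : Bool}
  {next : (Bool → ℕ) → Bool}

/-- The sets `K k` consist of neighbours of `v` in colour `k`. -/
def Paints (e : α → α → Bool) (p : ℕ → α) (v : ℕ) (K : Bool → ℕ) : Prop :=
  ∀ k, Marks (K k) fun u => e (p v) (p u) = k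

theorem eq_false_of_guard (hK : Paints e p v K)
    (hnext : next K = false) : guard K next = false :=
  pick_eq_false (fun _ => hnext) fun h => by
    obtain ⟨u, hu, hu'⟩ := (hK true).of_disjoint_eq_false (hK false) h
    simp [hu] at hu'

theorem Paints.extend {same other : ℕ} (hK : Paints e p v K)
    (hsame : Marks same fun u => e (p v) (p u) = k)
    (hother : Marks other fun u => e (p v) (p u) = !k) :
    Paints e p v (extend K k same other) := fun l => (hK l).lor <| by
  cases k <;> cases l <;> assumption

variable [LinearOrder α] {S : Set ℕ} {inner far : ℕ} {r : Vertex}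

/-- The colouring `e` obeys the rule `r` when label `i` stands for the vertex `p i`. -/
def Rule.Holds (e : α → α → Bool) (p : ℕ → α) (r : Rule) : Prop :=
  p r.fst < p r.snd → e (p r.fst) (p r.snd) = r.color

/-- What `r` records is true of `e`; the labels in `S` are those already placed. -/
structure Vertex.Sound (e : α → α → Bool) (p : ℕ → α) (S : Set ℕ) (r : Vertex) : Prop where
  mem : r.label ∈ S
  before : Marks r.before fun u => u ∈ S ∧ p u < p r.label
  after : Marks r.after fun u => u ∈ S ∧ p r.label < p u
  nbr : ∀ k, Marks (r.nbr k) fun u => e (p u) (p r.label) = k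
  mated : ∀ k, Marks (r.mated k) fun u => ∃ m ∈ S, IsMiddle e k (p u) (p r.label) (p m)

/-- The vertex `r` is recorded correctly, `inner` consists of placed labels between the new label
`v` and `r`, and `far` of placed labels on the other side of `v`. -/
structure Visible (e : α → α → Bool) (p : ℕ → α) (S : Set ℕ) (v : ℕ) (inner far : ℕ)
    (r : Vertex) : Prop where
  sound : r.Sound e p S
  inner : Marks inner fun u => u ∈ S ∧ p u ∈ Set.uIoo (p v) (p r.label)
  far : Marks far fun u => u ∈ S ∧ p v ∈ Set.uIoo (p u) (p r.label)

theorem marks_middles (hr : Visible e p S v inner far r)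
    (hK : Paints e p v K) (hk : e (p v) (p r.label) = k) :
    Marks (middles inner r K k) fun u => u ∈ S ∧ IsMiddle e k (p v) (p r.label) (p u) :=
  ((hr.inner.land (hr.sound.nbr k)).land (hK k)).mono
    fun _ ⟨⟨⟨hu, hmem⟩, hur⟩, hvu⟩ => ⟨hu, hmem, hk, hvu, hur⟩

theorem marks_forced (he : DiamondFree e) (hp : Set.InjOn p S) (hv : p v ∉ p '' S)
    (hr : Visible e p S v inner far r) (hK : Paints e p v K) (hk : e (p v) (p r.label) = k) :
    Marks (forced inner far r K k) fun u => e (p v) (p u) = !k := by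
  refine Marks.lor ((hr.far.land (hr.sound.mated k)).mono ?_) (.pick (fun _ => marks_zero) ?_)
  · rintro u ⟨⟨-, hmem⟩, m, hm, hmate⟩
    by_contra hu
    have hvu : e (p u) (p v) = k := he.symm _ _ ▸ Bool.not_eq_not.mp hu
    exact hv ⟨m, hm, he.middle_subsingleton k _ _ hmate ⟨hmem, hmate.base, hvu, hk⟩⟩
  · intro hne u hu
    obtain ⟨m, hm⟩ := Nat.exists_testBit_of_ne_zero (Nat.ne_of_beq_eq_false hne)
    obtain ⟨hmS, hmid⟩ := marks_middles hr hK hk m hm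
    obtain ⟨hu, hnot⟩ := testBit_of_xor_land (C := K k) hu
    obtain ⟨⟨huS, hmem⟩, hur⟩ := (hr.inner.land (hr.sound.nbr k)) u hu
    by_contra hvu
    have hum : p u = p m :=
      he.middle_subsingleton k _ _ ⟨hmem, hk, Bool.not_eq_not.mp hvu, hur⟩ hmid
    exact hnot (hp huS hmS hum ▸ hm)

theorem paint_eq_false (he : DiamondFree e) (hp : Set.InjOn p S) (hv : p v ∉ p '' S)
    (hr : Visible e p S v inner far r) (hK : Paints e p v K) (hk : e (p v) (p r.label) = k)
    (hnext : ∀ K, Paints e p v K → next K = false) : paint inner far r next K k = false := by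
  have hmid := marks_middles hr hK hk
  refine pick_eq_false (fun _ => ?_) fun h => ?_
  · have hK' := hK.extend (marks_bit hk) (marks_forced he hp hv hr hK hk)
    exact eq_false_of_guard hK' (hnext _ hK')
  · obtain ⟨i, j, ⟨hi, hi'⟩, ⟨hj, hj'⟩, hne⟩ := hmid.exists_ne h
    exact absurd (hp hi hj (he.middle_subsingleton k _ _ hi' hj')) hne

theorem sweep_eq_false (he : DiamondFree e) (hp : Set.InjOn p S) (hv : p v ∉ p '' S)
    {split : Bool} {inner : Vertex → ℕ} {l : List Vertex}
    (hl : ∀ r ∈ l, Visible e p S v (inner r) far r) (hK : Paints e p v K)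
    (hnext : ∀ K, Paints e p v K → next K = false) : sweep split inner far next l K = false := by
  induction l generalizing K with
  | nil => exact hnext K hK
  | cons r l ih =>
    have ih (K) (hK : Paints e p v K) : sweep split inner far next l K = false :=
      ih (fun r hr => hl r (.tail _ hr)) hK
    have hpaint : paint (inner r) far r (sweep split inner far next l) K
        (e (p v) (p r.label)) = false := paint_eq_false he hp hv (hl r (.head _)) hK rfl ih
    refine pick_eq_false (fun _ => pick_eq_false (fun _ => pick_eq_false (fun _ => ?_)
      fun _ => ih K hK) fun h => ?_) fun h => ?_
    · cases hk : e (p v) (p r.label) <;> rw [hk] at hpaint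
      · exact pick_eq_false (fun _ => hpaint) fun _ => rfl
      · exact pick_eq_false (fun h => absurd (h.symm.trans hpaint) (by decide)) fun _ => rfl
    · rwa [(hK false).of_disjoint_bit_eq_false h] at hpaint
    · rwa [(hK true).of_disjoint_bit_eq_false h] at hpaint

theorem marks_mates {inner : Vertex → ℕ} {l : List Vertex}
    (hl : ∀ r ∈ l, Visible e p S v (inner r) far r) (hK : Paints e p v K) (k : Bool) :
    Marks (mates inner K k l) fun u => ∃ m ∈ S, IsMiddle e k (p v) (p u) (p m) := by
  induction l with
  | nil => exact marks_zero
  | cons r l ih =>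
    have ih := ih fun r hr => hl r (.tail _ hr)
    refine .pick (fun _ => ih) fun h => Marks.lor (fun u hu => ?_) ih
    have hr := hl r (.head _)
    obtain ⟨hvu, rfl⟩ := ((hK k).land (marks_bit rfl)) u hu
    obtain ⟨m, ⟨hm, hmem⟩, hmr, hvm⟩ :=
      hr.inner.of_disjoint_eq_false ((hr.sound.nbr k).land (hK k)) h
    exact ⟨m, hm, hmem, hvu, hvm, hmr⟩

theorem Vertex.Sound.mono {T : Set ℕ} (h : r.Sound e p S) (hST : S ⊆ T) : r.Sound e p T where
  mem := hST h.mem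
  before := h.before.mono fun _ => And.imp_left (hST ·)
  after := h.after.mono fun _ => And.imp_left (hST ·)
  nbr := h.nbr
  mated k := (h.mated k).mono fun _ ⟨m, hm, hmid⟩ => ⟨m, hST hm, hmid⟩

theorem Visible.connect (he : DiamondFree e) (hr : Visible e p S v inner far r)
    (hK : Paints e p v K) {mate : Bool → ℕ}
    (hmate : ∀ k, Marks (mate k) fun u => ∃ m ∈ S, IsMiddle e k (p v) (p u) (p m)) :
    (connect v far K mate r).Sound e p (insert v S) where
  mem := .inr hr.sound.mem
  before := (hr.sound.mono (Set.subset_insert v S)).before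
  after := (hr.sound.mono (Set.subset_insert v S)).after
  nbr k := .pick (fun _ => hr.sound.nbr k) fun h =>
    (hr.sound.nbr k).lor (marks_bit ((hK k).of_disjoint_bit_eq_false h))
  mated k := by
    have hold := ((hr.sound.mono (Set.subset_insert v S)).mated k)
    refine .pick (fun _ => hold) fun h =>
      (hold.lor ?_).lor (.pick (fun _ => marks_zero) fun h => ?_)
    · have hvr := (hK k).of_disjoint_bit_eq_false h
      exact (hr.far.land ((hr.sound.nbr k).land (hK k))).mono fun u ⟨⟨_, hmem⟩, hur, hvu⟩ =>
        ⟨v, .inl rfl, hmem, hur, he.symm _ _ ▸ hvu, hvr⟩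
    · obtain ⟨m, hm, hmid⟩ := (hmate k).of_disjoint_bit_eq_false h
      exact marks_bit ⟨m, .inr hm, hmid⟩

/-- A state of the search that describes `e` on the labels in `S`. -/
structure Drawing (e : α → α → Bool) (p : ℕ → α) (S : Set ℕ) (st : List Vertex) : Prop where
  sound : ∀ r ∈ st, r.Sound e p S
  sorted : (st.map Vertex.label).Pairwise fun i j => p i < p j

/-- The label `v` is to be inserted into the drawing `L.reverse ++ R` between its two parts. -/
structure Slot (e : α → α → Bool) (p : ℕ → α) (S : Set ℕ) (v A B : ℕ) (L R : List Vertex) :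
    Prop where
  drawing : Drawing e p S (L.reverse ++ R)
  below : ∀ r ∈ L, p r.label < p v
  above : ∀ r ∈ R, p v < p r.label
  before : Marks A fun u => u ∈ S ∧ p u < p v
  after : Marks B fun u => u ∈ S ∧ p v < p u

variable {A B : ℕ} {L R : List Vertex}

theorem Slot.visible_below (h : Slot e p S v A B L R) :
    ∀ r ∈ L, Visible e p S v (r.after.land A) B r := fun r hr =>
  have hsound := h.drawing.sound r (by simp [hr])
  { sound := hsound
    inner := (hsound.after.land h.before).mono fun _ ⟨⟨hu, hru⟩, _, huv⟩ =>
      ⟨hu, Set.Ioo_subset_uIoo' ⟨hru, huv⟩⟩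
    far := h.after.mono fun _ ⟨hu, hvu⟩ => ⟨hu, Set.Ioo_subset_uIoo' ⟨h.below r hr, hvu⟩⟩ }

theorem Slot.visible_above (h : Slot e p S v A B L R) :
    ∀ r ∈ R, Visible e p S v (r.before.land B) A r := fun r hr =>
  have hsound := h.drawing.sound r (by simp [hr])
  { sound := hsound
    inner := (hsound.before.land h.after).mono fun _ ⟨⟨hu, hur⟩, _, hvu⟩ =>
      ⟨hu, Set.Ioo_subset_uIoo ⟨hvu, hur⟩⟩
    far := h.before.mono fun _ ⟨hu, huv⟩ => ⟨hu, Set.Ioo_subset_uIoo ⟨huv, h.above r hr⟩⟩ }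

theorem Slot.place (he : DiamondFree e) (h : Slot e p S v A B L R) (hK : Paints e p v K) :
    Drawing e p (insert v S) (place v A B L R K) := by
  have hmates (k) := (marks_mates h.visible_below hK k).lor (marks_mates h.visible_above hK k)
  have hS : S ⊆ insert v S := Set.subset_insert v S
  rw [OrderedDiamond.place, List.reverseAux_eq]
  refine ⟨fun r hr => ?_, ?_⟩
  · simp only [List.mem_append, List.mem_reverse, List.mem_map, List.mem_cons] at hr
    obtain ⟨r, hr, rfl⟩ | rfl | ⟨r, hr, rfl⟩ := hr
    · have hc := (h.visible_below r hr).connect he hK hmates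
      exact { hc with after := hc.after.lor (marks_bit ⟨.inl rfl, h.below r hr⟩) }
    · exact ⟨.inl rfl, h.before.mono fun _ => And.imp_left (hS ·),
        h.after.mono fun _ => And.imp_left (hS ·),
        fun k => (hK k).mono fun u hu => he.symm _ _ ▸ hu,
        fun k => (hmates k).mono fun u ⟨m, hm, hmid⟩ => ⟨m, hS hm, hmid.symm he.symm⟩⟩
    · have hc := (h.visible_above r hr).connect he hK hmates
      exact { hc with before := hc.before.lor (marks_bit ⟨.inl rfl, h.above r hr⟩) }
  · have hsorted := h.drawing.sorted
    have hbelow : ∀ i ∈ L.map Vertex.label, p i < p v := by simpa using h.below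
    have habove : ∀ i ∈ R.map Vertex.label, p v < p i := by simpa using h.above
    simp only [List.map_append, List.map_reverse, List.map_cons, List.map_map, Function.comp_def,
      OrderedDiamond.connect, List.pairwise_append, List.pairwise_cons, List.mem_reverse,
      List.mem_cons] at hsorted ⊢
    exact ⟨hsorted.1, ⟨habove, hsorted.2.1⟩, fun i hi j hj =>
      hj.elim (fun hj => hj ▸ hbelow i hi) (hsorted.2.2 i hi j)⟩

theorem insertBetween_eq_false (he : DiamondFree e) (hp : Set.InjOn p S) (hv : p v ∉ p '' S)
    (h : Slot e p S v A B L R) {known : ℕ → ℕ → Bool → ℕ} (hknown : Paints e p v (known A B))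
    {next : List Vertex → Bool} (hnext : ∀ st, Drawing e p (insert v S) st → next st = false) :
    insertBetween v known next A B L R = false := by
  refine eq_false_of_guard hknown ?_
  refine sweep_eq_false he hp hv h.visible_below hknown fun K hK => ?_
  refine sweep_eq_false he hp hv h.visible_above hK fun K hK => ?_
  refine sweep_eq_false he hp hv h.visible_below hK fun K hK => ?_
  exact sweep_eq_false he hp hv h.visible_above hK fun K hK => hnext _ (h.place he hK)

theorem insertAfter_eq_false (he : DiamondFree e) (hp : Set.InjOn p S) (hv : p v ∉ p '' S)
    {known : ℕ → ℕ → Bool → ℕ}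
    (hknown : ∀ A B, Marks A (fun u => u ∈ S ∧ p u < p v) → Marks B (fun u => u ∈ S ∧ p v < p u) →
      Paints e p v (known A B))
    {next : List Vertex → Bool} (hnext : ∀ st, Drawing e p (insert v S) st → next st = false)
    (hdraw : Drawing e p S (L.reverse ++ R)) (hL : ∀ r ∈ L, p r.label < p v)
    (hA : Marks A fun u => u ∈ S ∧ p u < p v) : insertAfter v known next R A L = false := by
  induction R generalizing A L with
  | nil =>
    exact insertBetween_eq_false he hp hv ⟨hdraw, hL, by simp, hA, marks_zero⟩
      (hknown A 0 hA marks_zero) hnext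
  | cons r R ih =>
    have hr := hdraw.sound r (by simp)
    have hsorted := (List.pairwise_append.mp (List.map_append ▸ hdraw.sorted)).2.1
    obtain hvr | hrv := lt_or_gt_of_ne fun h => hv ⟨r.label, hr.mem, h.symm⟩
    · have habove : ∀ r' ∈ r :: R, p v < p r'.label := by
        simp only [List.map_cons, List.pairwise_cons, List.mem_map] at hsorted
        rintro r' (_ | ⟨_, hr'⟩)
        exacts [hvr, hvr.trans (hsorted.1 _ ⟨r', hr', rfl⟩)]
      have hB : Marks (r.after.lor (bit r.label)) fun u => u ∈ S ∧ p v < p u :=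
        (hr.after.mono fun _ => .imp_right hvr.trans).lor (marks_bit ⟨hr.mem, hvr⟩)
      exact pick_eq_false (fun h => absurd
        (insertBetween_eq_false he hp hv ⟨hdraw, hL, habove, hA, hB⟩ (hknown A _ hA hB) hnext)
        (h ▸ Bool.noConfusion)) fun _ => rfl
    · refine pick_eq_false (fun _ => ih ?_ ?_ ?_) fun _ => rfl
      · simpa using hdraw
      · exact List.forall_mem_cons.mpr ⟨hrv, hL⟩
      · exact (hr.before.mono fun _ => .imp_right (·.trans hrv)).lor (marks_bit ⟨hr.mem, hrv⟩)

theorem marks_mask {rules : List Rule} {f : Rule → Bool} {g : Rule → ℕ} {P : ℕ → Prop}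
    (h : ∀ r ∈ rules, f r → P (g r)) : Marks (mask rules f g) P := by
  induction rules with
  | nil => exact marks_zero
  | cons r rules ih =>
    have ih := ih fun r hr => h r (.tail _ hr)
    exact .pick (fun hf => (marks_bit (h r (.head _) hf)).lor ih) fun _ => ih

theorem paints_known (he : DiamondFree e) {rules : List Rule} (hrules : ∀ r ∈ rules, r.Holds e p)
    (hA : Marks A fun u => u ∈ S ∧ p u < p v) (hB : Marks B fun u => u ∈ S ∧ p v < p u) :
    Paints e p v (known rules v A B) := fun k => by
  have hsnd : Marks (mask rules (fun r => r.snd.beq v && r.color == k) Rule.fst)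
      fun u => p u < p v → e (p u) (p v) = k := marks_mask fun r hr h => by
    obtain ⟨hv, rfl⟩ := Bool.and_eq_true_iff.mp h |>.imp Nat.eq_of_beq_eq_true eq_of_beq
    exact hv ▸ hrules r hr
  have hfst : Marks (mask rules (fun r => r.fst.beq v && r.color == k) Rule.snd)
      fun u => p v < p u → e (p v) (p u) = k := marks_mask fun r hr h => by
    obtain ⟨hv, rfl⟩ := Bool.and_eq_true_iff.mp h |>.imp Nat.eq_of_beq_eq_true eq_of_beq
    exact hv ▸ hrules r hr
  exact ((hsnd.land hA).mono fun u ⟨h, _, huv⟩ => he.symm _ _ ▸ h huv).lor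
    ((hfst.land hB).mono fun u ⟨h, _, hvu⟩ => h hvu)

theorem refutes_eq_false (he : DiamondFree e) {rules : List Rule}
    (hrules : ∀ r ∈ rules, r.Holds e p) {order : List ℕ} (horder : (order.map p).Nodup) :
    refutes rules order [] = false := by
  suffices h : ∀ (S : Set ℕ) (st : List Vertex), Set.InjOn p S → (∀ v ∈ order, p v ∉ p '' S) →
      Drawing e p S st → refutes rules order st = false from
    h ∅ [] (Set.injOn_empty p) (by simp) ⟨by simp, by simp⟩
  induction order with
  | nil => exact fun _ _ _ _ _ => rfl
  | cons v order ih =>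
    intro S st hp hfresh hst
    rw [List.map_cons, List.nodup_cons] at horder
    have hv := hfresh v (.head _)
    refine insertAfter_eq_false he hp hv (fun A B => paints_known he hrules) (fun st' hst' => ?_)
      hst (by simp) marks_zero
    refine ih horder.2 _ st' ((Set.injOn_insert fun h => hv ⟨v, h, rfl⟩).mpr ⟨hp, hv⟩) ?_ hst'
    intro w hw
    rw [Set.image_insert_eq, Set.mem_insert_iff, not_or]
    exact ⟨fun h => horder.1 (h ▸ List.mem_map_of_mem hw), hfresh w (.tail _ hw)⟩

end Search

section Layers

/-- The rules forbidding that `i` lies before `j`. -/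
def notBefore (i j : ℕ) : List Rule := [⟨i, j, true⟩, ⟨i, j, false⟩]

/-- The rules saying that the labels in the list increase. -/
def orderRules : List ℕ → List Rule
  | [] => []
  | i :: l => l.flatMap (notBefore · i) ++ orderRules l

/-- The rules saying that the labels in the list form an increasing sequence in `profile e k l`,
with `0` and `11` standing for `⊥` and `⊤`. -/
def layerRules (k l : Bool) (labels : List ℕ) : List Rule :=
  orderRules (0 :: labels ++ [11]) ++ labels.flatMap fun i => [⟨0, i, k⟩, ⟨i, 11, l⟩]

/-- The rules satisfied by construction: labels `1` to `4`, `5` to `6` and `7` to `10` are reserved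
for the profiles `(true, false)`, `(false, false)` and `(false, true)`. Reversal of the order then
takes label `i` to `11 - i`. -/
def baseRules : List Rule :=
  ⟨0, 11, true⟩ :: layerRules true false [1, 2, 3, 4] ++ layerRules false false [5, 6] ++
    layerRules false true [7, 8, 9, 10]

/-- The rule as it reads in the reversed order. -/
def Rule.mirror (r : Rule) : Rule := ⟨11 - r.snd, 11 - r.fst, r.color⟩

/-- The base rules, given the colours `a` of the edge `{1, 3}` and `c` of the edge `{5, 6}`. -/
def colorRules (a c : Bool) : List Rule := ⟨1, 3, a⟩ :: ⟨5, 6, c⟩ :: baseRules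

/-- Consequences of `colorRules a c` for the labels `1` to `6`, found by computer. -/
def lowerRules (a c : Bool) : List Rule :=
  [⟨1, 2, true⟩, ⟨1, 3, a⟩, ⟨1, 4, !a⟩, ⟨2, 3, !a⟩, ⟨2, 4, a⟩, ⟨3, 4, false⟩,
    ⟨1, 5, true⟩, ⟨1, 6, true⟩, ⟨2, 6, true⟩] ++
  bif c then
    [⟨5, 3, true⟩, ⟨5, 4, true⟩, ⟨6, 1, true⟩, ⟨6, 2, true⟩] ++
      notBefore 2 5 ++ notBefore 3 5 ++ notBefore 4 5 ++ notBefore 3 6 ++ notBefore 4 6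
  else
    [⟨2, 5, true⟩, ⟨3, 5, true⟩, ⟨3, 6, true⟩, ⟨4, 6, false⟩,
      ⟨5, 1, true⟩, ⟨5, 2, true⟩, ⟨5, 3, true⟩, ⟨5, 4, true⟩] ++ notBefore 4 5

/-- An order of insertion that keeps the search small; the labels of `lowerRules` come first. -/
def layerOrder : List ℕ := [0, 11, 1, 2, 3, 4, 5, 6, 9, 8, 10, 7]

/-- The rules saying that `r` fails. -/
def negation (r : Rule) : List Rule := ⟨r.fst, r.snd, !r.color⟩ :: notBefore r.snd r.fst

/-- The base rules, `lowerRules` and their mirror images, where `b` is the colour of the mirror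
image `{8, 10}` of `{1, 3}`. -/
def allRules (a b c : Bool) : List Rule :=
  ⟨5, 6, c⟩ :: baseRules ++ lowerRules a c ++ (lowerRules b c).map Rule.mirror

set_option maxRecDepth 1000000 in
theorem refutes_negation_of_mem_lowerRules : ∀ a c, ∀ r ∈ lowerRules a c,
    refutes (negation r ++ colorRules a c) (layerOrder.take 8) [] = true := by
  decide +kernel

-- Reversal of the order reduces the missing pair `(a, b) = (false, true)` to `(true, false)`.
set_option maxHeartbeats 0 in
-- The six evaluations are separate in order to bound the memory that each of them takes.
set_option maxRecDepth 1000000 in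
theorem refutes_allRules : ∀ a b c, (a || !b) = true →
    refutes (allRules a b c) layerOrder [] = true := by
  rintro (_ | _) (_ | _) (_ | _) <;> decide +kernel

variable {α : Type*} [LinearOrder α] {e : α → α → Bool} {p : ℕ → α}

/-- The vertices `p 0, …, p 11` are distinct and lie in the layers described by `baseRules`. -/
structure Layered (e : α → α → Bool) (p : ℕ → α) : Prop where
  injOn : Set.InjOn p (Set.Iio 12)
  holds : ∀ r ∈ baseRules, r.Holds e p

theorem holds_notBefore {i j : ℕ} (h : p j < p i) : ∀ r ∈ notBefore i j, r.Holds e p := by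
  simp [notBefore, Rule.Holds, h.not_gt]

theorem holds_orderRules {l : List ℕ} (h : (l.map p).Pairwise (· < ·)) :
    ∀ r ∈ orderRules l, r.Holds e p := by
  induction l with
  | nil => simp [orderRules]
  | cons i l ih =>
    rw [List.map_cons, List.pairwise_cons] at h
    refine List.forall_mem_append.mpr ⟨fun r hr => ?_, ih h.2⟩
    obtain ⟨j, hj, hr⟩ := List.mem_flatMap.mp hr
    exact holds_notBefore (h.1 _ (List.mem_map_of_mem hj)) r hr

theorem holds_layerRules [Fintype α] [BoundedOrder α] [Nontrivial α] {k l : Bool}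
    {labels : List ℕ} (hbot : p 0 = ⊥) (htop : p 11 = ⊤)
    (hsorted : (labels.map p).Pairwise (· < ·)) (hmem : ∀ a ∈ labels.map p, a ∈ profile e k l) :
    ∀ r ∈ layerRules k l labels, r.Holds e p := by
  have hprofile (a) (ha : a ∈ labels.map p) := mem_profile.mp (hmem a ha)
  refine List.forall_mem_append.mpr ⟨holds_orderRules ?_, fun r hr => ?_⟩
  · simp only [List.cons_append, List.map_cons, List.map_append, List.map_nil,
      List.pairwise_cons, List.pairwise_append, List.forall_mem_append, List.forall_mem_singleton,
      hbot, htop]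
    exact ⟨⟨fun a ha => (hprofile a ha).1, bot_lt_top⟩, hsorted, ⟨by simp, .nil⟩,
      fun a ha => (hprofile a ha).2.1⟩
  · obtain ⟨i, hi, hr⟩ := List.mem_flatMap.mp hr
    obtain ⟨-, -, hk, hl⟩ := hprofile _ (List.mem_map_of_mem hi)
    simp only [List.mem_cons, List.not_mem_nil, or_false] at hr
    obtain rfl | rfl := hr
    exacts [fun _ => hbot ▸ hk, fun _ => htop ▸ hl]

theorem holds_of_refutes_negation (he : DiamondFree e) {rules : List Rule}
    (hrules : ∀ r ∈ rules, r.Holds e p) {order : List ℕ} (horder : (order.map p).Nodup) {r : Rule}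
    (h : refutes (negation r ++ rules) order [] = true) : r.Holds e p := by
  intro hlt
  by_contra hcolor
  refine Bool.eq_false_iff.mp
    (refutes_eq_false he (List.forall_mem_append.mpr ⟨?_, hrules⟩) horder) h
  exact List.forall_mem_cons.mpr ⟨fun _ => Bool.eq_not_of_ne hcolor, holds_notBefore hlt⟩

theorem Rule.holds_dual_iff (he : DiamondFree e) {r : Rule} :
    r.Holds (α := αᵒᵈ) e (fun i => p (11 - i)) ↔ r.mirror.Holds e p :=
  forall_congr' fun _ => he.symm (p (11 - r.fst)) (p (11 - r.snd)) ▸ Iff.rfl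

theorem Layered.dual (he : DiamondFree e) (h : Layered e p) :
    Layered (α := αᵒᵈ) e fun i => p (11 - i) where
  injOn i hi j hj hij := by
    have hmirror (i : ℕ) : 11 - i < 12 := by omega
    have := h.injOn (hmirror i) (hmirror j) hij
    rw [Set.mem_Iio] at hi hj
    omega
  holds r hr := by
    have hmirror : ∀ r ∈ baseRules, r.mirror ∈ baseRules := by decide
    exact (Rule.holds_dual_iff he).mpr (h.holds _ (hmirror r hr))

theorem Layered.nodup (h : Layered e p) : (layerOrder.map p).Nodup :=
  List.Nodup.map_on (fun i hi j hj => h.injOn ((by decide : ∀ i ∈ layerOrder, i < 12) i hi)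
    ((by decide : ∀ i ∈ layerOrder, i < 12) j hj)) (by decide)

theorem Layered.holds_lowerRules (he : DiamondFree e) (h : Layered e p) :
    ∀ r ∈ lowerRules (e (p 1) (p 3)) (e (p 5) (p 6)), r.Holds e p := fun r hr => by
  refine holds_of_refutes_negation he ?_ ?_ (refutes_negation_of_mem_lowerRules _ _ r hr)
  · exact List.forall_mem_cons.mpr ⟨fun _ => rfl, List.forall_mem_cons.mpr ⟨fun _ => rfl, h.holds⟩⟩
  · exact h.nodup.sublist ((List.take_sublist _ _).map p)

theorem Layered.color_eq (he : DiamondFree e) (h : Layered e p) :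
    e (p 1) (p 3) = false ∧ e (p 8) (p 10) = true := by
  have hall : ∀ r ∈ allRules (e (p 1) (p 3)) (e (p 8) (p 10)) (e (p 5) (p 6)), r.Holds e p := by
    refine List.forall_mem_append.mpr ⟨List.forall_mem_append.mpr ⟨List.forall_mem_cons.mpr
      ⟨fun _ => rfl, h.holds⟩, h.holds_lowerRules he⟩, List.forall_mem_map.mpr fun r hr => ?_⟩
    rw [he.symm (p 8), he.symm (p 5)] at hr
    exact (Rule.holds_dual_iff he).mp ((h.dual he).holds_lowerRules he.dual r hr)
  simpa using mt (refutes_allRules _ _ _) (Bool.eq_false_iff.mp (refutes_eq_false he hall h.nodup))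

theorem Layered.not_diamondFree (h : Layered e p) : ¬ DiamondFree e := fun he => by
  have hcolor : e (p 10) (p 8) = false := ((h.dual he).color_eq he.dual).1
  rw [he.symm, (h.color_eq he).2] at hcolor
  exact Bool.noConfusion hcolor

theorem exists_pairwise_lt_of_le_card {s : Finset α} {n : ℕ} (h : n ≤ s.card) :
    ∃ l : List α, l.length = n ∧ l.Pairwise (· < ·) ∧ ∀ a ∈ l, a ∈ s :=
  ⟨s.sort.take n, by simpa using h, s.sortedLT_sort.pairwise.sublist (List.take_sublist _ _),
    fun _ ha => (Finset.mem_sort _).mp (List.mem_of_mem_take ha)⟩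

theorem nodup_layers [Fintype α] [BoundedOrder α] [Nontrivial α] {xs ys zs : List α}
    (hx : xs.Nodup) (hy : ys.Nodup) (hz : zs.Nodup) (hxmem : ∀ a ∈ xs, a ∈ profile e true false)
    (hymem : ∀ a ∈ ys, a ∈ profile e false false) (hzmem : ∀ a ∈ zs, a ∈ profile e false true) :
    (⊥ :: xs ++ ys ++ zs ++ [⊤]).Nodup := by
  simp only [mem_profile] at hxmem hymem hzmem
  simp only [List.nodup_append, List.nodup_cons, List.mem_cons, List.mem_append]
  have := bot_lt_top (α := α)
  grind

theorem injOn_getD_of_nodup {β : Type*} {l : List β} (h : l.Nodup) (d : β) :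
    Set.InjOn (l.getD · d) (Set.Iio l.length) := fun i hi j hj hij => by
  rw [Set.mem_Iio] at hi hj
  simp only [List.getD_eq_getElem _ _ hi, List.getD_eq_getElem _ _ hj] at hij
  exact h.getElem_inj_iff.mp hij

theorem exists_layered [Fintype α] [BoundedOrder α] (he : DiamondFree e)
    (hcard : 13 ≤ Fintype.card α) (h : e ⊥ ⊤ = true) : ∃ p, Layered e p := by
  have : Nontrivial α := Fintype.one_lt_card_iff_nontrivial.mp (by omega)
  obtain ⟨hff, htf, hft⟩ := he.le_card_profile hcard h
  obtain ⟨xs, hx, hxs, hxmem⟩ := exists_pairwise_lt_of_le_card htf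
  obtain ⟨ys, hy, hys, hymem⟩ := exists_pairwise_lt_of_le_card hff
  obtain ⟨zs, hz, hzs, hzmem⟩ := exists_pairwise_lt_of_le_card hft
  have hnodup := nodup_layers hxs.nodup hys.nodup hzs.nodup hxmem hymem hzmem
  obtain ⟨x₁, x₂, x₃, x₄, rfl⟩ := List.length_eq_four.mp hx
  obtain ⟨y₁, y₂, rfl⟩ := List.length_eq_two.mp hy
  obtain ⟨z₁, z₂, z₃, z₄, rfl⟩ := List.length_eq_four.mp hz
  refine ⟨fun i => [⊥, x₁, x₂, x₃, x₄, y₁, y₂, z₁, z₂, z₃, z₄, ⊤].getD i ⊤,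
    injOn_getD_of_nodup hnodup ⊤, List.forall_mem_append.mpr ⟨List.forall_mem_append.mpr
      ⟨List.forall_mem_cons.mpr ⟨fun _ => h, ?_⟩, ?_⟩, ?_⟩⟩
  exacts [holds_layerRules rfl rfl hxs hxmem, holds_layerRules rfl rfl hys hymem,
    holds_layerRules rfl rfl hzs hzmem]

theorem not_diamondFree_of_card [Fintype α] [BoundedOrder α] (hcard : 13 ≤ Fintype.card α) :
    ¬ DiamondFree e := fun he => by
  cases h : e ⊥ ⊤ with
  | true =>
    obtain ⟨p, hp⟩ := exists_layered he hcard h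
    exact hp.not_diamondFree he
  | false =>
    obtain ⟨p, hp⟩ := exists_layered he.compl hcard (by simp [h])
    exact hp.not_diamondFree he.compl

end Layers

section Bounds

theorem containsMonoOrderedCopy_diamond_iff {N : ℕ} {c : ℕ → ℕ → Bool} :
    ContainsMonoOrderedCopy 4 N {(1, 2), (1, 3), (1, 4), (2, 4), (3, 4)} c ↔
      ∃ w ≤ N, ∃ m' < w, ∃ m < m', ∃ u < m, u ≠ 0 ∧
        c u m = c u w ∧ c m w = c u w ∧ c u m' = c u w ∧ c m' w = c u w := by
  simp only [ContainsMonoOrderedCopy, ContainsOrderedCopy, Finset.forall_mem_insert,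
    Finset.mem_singleton, forall_eq]
  constructor
  · rintro ⟨k, φ, hφ, hmono, h12, h13, h14, h24, h34⟩
    have h0 := (hφ 1 le_rfl (by decide)).1
    exact ⟨φ 4, (hφ 4 (by decide) le_rfl).2, φ 3, hmono 3 4 (by decide) (by decide) le_rfl,
      φ 2, hmono 2 3 (by decide) (by decide) (by decide), φ 1, hmono 1 2 le_rfl (by decide)
      (by decide), by omega, h12.trans h14.symm, h24.trans h14.symm, h13.trans h14.symm,
      h34.trans h14.symm⟩
  · rintro ⟨w, hw, m', hmw', m, hmm', u, hum, hu, hl, hr, hl', hr'⟩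
    refine ⟨c u w, fun i => [0, u, m, m', w].getD i 0, fun i hi hi4 => ?_, fun i j hi hij hj => ?_,
      hl, hl', rfl, hr, hr'⟩
    · interval_cases i <;> simp <;> omega
    · interval_cases j <;> interval_cases i <;> simp <;> omega

theorem containsMonoOrderedCopy_thirteen (c : ℕ → ℕ → Bool) :
    ContainsMonoOrderedCopy 4 13 {(1, 2), (1, 3), (1, 4), (2, 4), (3, 4)} c := by
  by_contra h
  rw [containsMonoOrderedCopy_diamond_iff] at h
  refine not_diamondFree_of_card (α := Fin 13) (e := fun u w => c (min u w + 1) (max u w + 1))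
    (by simp) (.of_forall_lt (fun u w => by rw [min_comm, max_comm]) ?_)
  intro u m m' w hum hmm' hmw' hl hr hl' hr'
  have hmw := hmm'.trans hmw'
  have hum' := hum.trans hmm'
  simp only [min_eq_left_of_lt, max_eq_right_of_lt, hum, hum', hmw, hmw', hum.trans hmw]
    at hl hr hl' hr'
  exact h ⟨w + 1, w.isLt, m' + 1, by simpa, m + 1, by simpa, u + 1, by simpa, by simp, hl, hr, hl',
    hr'⟩

/-- A colouring of the complete graph on `{1, …, 12}`: the entry with index `a` lists the `b > a`
whose edge to `a` is `true`. It was found by computer. -/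
def extremalColoring (a b : ℕ) : Bool :=
  ([[], [2, 3, 5, 6, 8, 12], [3, 4, 6, 7, 8], [4, 5, 7, 9], [5, 11, 12], [7, 11], [9, 10, 11],
    [8, 9, 10, 11], [12], [10, 12], [11, 12], [12]].getD a []).contains b

theorem not_containsMonoOrderedCopy_extremalColoring : ¬ ContainsMonoOrderedCopy 4 12
    {(1, 2), (1, 3), (1, 4), (2, 4), (3, 4)} extremalColoring := by
  rw [containsMonoOrderedCopy_diamond_iff]
  decide +kernel

end Bounds

end OrderedDiamond

/-- The ordered Ramsey number of the diamond `K₄ - e` on vertex set `{1,2,3,4}` with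
all edges of `K₄` except `(2, 3)` equals `13`: every 2-coloring of the edges
of the complete graph on `{1,…,13}` contains a monochromatic ordered copy, and
some 2-coloring of the edges of the complete graph on `{1,…,12}` contains
none. -/
theorem orderedRamsey_diamond_missing_23_eq :
    (∀ c : ℕ → ℕ → Bool,
      ContainsMonoOrderedCopy 4 13 {(1, 2), (1, 3), (1, 4), (2, 4), (3, 4)} c) ∧
    (∃ c : ℕ → ℕ → Bool,
      ¬ ContainsMonoOrderedCopy 4 12 {(1, 2), (1, 3), (1, 4), (2, 4), (3, 4)} c) :=
  ⟨OrderedDiamond.containsMonoOrderedCopy_thirteen, OrderedDiamond.extremalColoring,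
    OrderedDiamond.not_containsMonoOrderedCopy_extremalColoring⟩
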